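/- Let 𝚫 ∈ 𝒜. Then every 3-cycle (α₀,α₁,α₂) in Δ satisfies (α₀,α₁), (α₁,α₂), (α₂,α₀) ∈ R, i.e. {α₀,α₁,α₂} is a triangle of 𝚫; consequently the assignment sending a triangle {α, Ψα, Ψ²α} to the 3-cycle (α, Ψα, Ψ²α) is a bijection between the set of triangles of 𝚫 and the set of 3-cycles of Δ (up to cyclic permutation). -/

import Mathlib

/-! Common formalization infrastructure for gentle quivers (Bobinski–Buan,
    "Derived equivalence classification of gentle cluster tilted algebras"). -/

/-- A (finite) quiver with (length-two, monomial) relations.  Vertices and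
arrows are natural numbers; `V` and `A` are the finite sets of vertices and
arrows, `src`/`tgt` give the start and terminus of each arrow, and `rel` is the
set of relations, a relation `(a, b)` standing for the length-two path
`a·b` (so `src a = tgt b`). -/
structure QuivRel where
  V : Finset ℕ
  A : Finset ℕ
  src : ℕ → ℕ
  tgt : ℕ → ℕ
  rel : Finset (ℕ × ℕ)

namespace GentleQuiv

/-- Two vertices are adjacent if some arrow joins them (in either direction). -/
def Adj (Q : QuivRel) (x y : ℕ) : Prop :=
  ∃ a ∈ Q.A, (Q.src a = x ∧ Q.tgt a = y) ∨ (Q.src a = y ∧ Q.tgt a = x)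

/-- A quiver is connected if any two of its vertices are joined by a walk. -/
def Connected (Q : QuivRel) : Prop :=
  ∀ x ∈ Q.V, ∀ y ∈ Q.V, Relation.ReflTransGen (Adj Q) x y

/-- `l = [α₁, …, αₙ]` is a (nonempty) path in the quiver: consecutive arrows
compose, i.e. `s αᵢ = t αᵢ₊₁`. -/
def IsPathList (Q : QuivRel) (l : List ℕ) : Prop :=
  l ≠ [] ∧ (∀ a ∈ l, a ∈ Q.A) ∧ l.Chain' (fun a b => Q.src a = Q.tgt b)

/-- The path `l` contains a subpath (two consecutive arrows) lying in `R`. -/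
def HasRelSubpath (Q : QuivRel) (l : List ℕ) : Prop :=
  ∃ a b, (a, b) ∈ Q.rel ∧ [a, b] <:+: l

/-- Gentle quiver: connected, relations are composable pairs of arrows, at most
two arrows in/out of every vertex, the usual gentleness conditions on
relations, and a global bound forcing finite dimensionality. -/
def IsGentle (Q : QuivRel) : Prop :=
  Q.V.Nonempty ∧
  (∀ a ∈ Q.A, Q.src a ∈ Q.V ∧ Q.tgt a ∈ Q.V) ∧
  Connected Q ∧
  (∀ ρ ∈ Q.rel, ρ.1 ∈ Q.A ∧ ρ.2 ∈ Q.A ∧ Q.src ρ.1 = Q.tgt ρ.2) ∧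
  (∀ x, (Q.A.filter fun a => Q.src a = x).card ≤ 2) ∧
  (∀ x, (Q.A.filter fun a => Q.tgt a = x).card ≤ 2) ∧
  (∀ a ∈ Q.A, (Q.A.filter fun b => Q.src b = Q.tgt a ∧ (b, a) ∉ Q.rel).card ≤ 1) ∧
  (∀ a ∈ Q.A, (Q.A.filter fun c => Q.tgt c = Q.src a ∧ (a, c) ∉ Q.rel).card ≤ 1) ∧
  (∀ a ∈ Q.A, (Q.A.filter fun b => (b, a) ∈ Q.rel).card ≤ 1) ∧
  (∀ a ∈ Q.A, (Q.A.filter fun c => (a, c) ∈ Q.rel).card ≤ 1) ∧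
  (∃ n : ℕ, ∀ l : List ℕ, IsPathList Q l → l.length = n → HasRelSubpath Q l)

/-- A choice of functions `σ, τ : Δ₁ → {±1}` as in Avella-Alaminos–Geiss. -/
structure SigmaTau (Q : QuivRel) where
  σ : ℕ → ℤ
  τ : ℕ → ℤ
  σ_pm : ∀ a ∈ Q.A, σ a = 1 ∨ σ a = -1
  τ_pm : ∀ a ∈ Q.A, τ a = 1 ∨ τ a = -1
  σ_src : ∀ a ∈ Q.A, ∀ b ∈ Q.A, a ≠ b → Q.src a = Q.src b → σ a = -σ b
  τ_tgt : ∀ a ∈ Q.A, ∀ b ∈ Q.A, a ≠ b → Q.tgt a = Q.tgt b → τ a = -τ b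
  rel_iff : ∀ a ∈ Q.A, ∀ b ∈ Q.A, Q.src a = Q.tgt b → ((a, b) ∈ Q.rel ↔ σ a = τ b)

/-- A thread: either a trivial path/antipath `1_{x,ε}` at a vertex `x` with a
sign `ε`, or a sequence of arrows of positive length. -/
inductive Thread where
  | triv (x : ℕ) (ε : ℤ) : Thread
  | arrows (l : List ℕ) : Thread
deriving DecidableEq

/-- Source of a thread. -/
def Thread.source (Q : QuivRel) : Thread → ℕ
  | .triv x _ => x
  | .arrows l => Q.src l.getLast!

/-- Target of a thread. -/
def Thread.target (Q : QuivRel) : Thread → ℕ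
  | .triv x _ => x
  | .arrows l => Q.tgt l.head!

/-- `σω` (for paths and antipaths alike; `σ 1_{x,ε} = ε = σ 1'_{x,ε}`). -/
def Thread.sigma {Q : QuivRel} (st : SigmaTau Q) : Thread → ℤ
  | .triv _ ε => ε
  | .arrows l => st.σ l.getLast!

/-- `τω` when `ω` is regarded as a path (`τ 1_{x,ε} = -ε`). -/
def Thread.tauPath {Q : QuivRel} (st : SigmaTau Q) : Thread → ℤ
  | .triv _ ε => -ε
  | .arrows l => st.τ l.head!

/-- `τω` when `ω` is regarded as an antipath (`τ 1'_{x,ε} = ε`). -/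
def Thread.tauAnti {Q : QuivRel} (st : SigmaTau Q) : Thread → ℤ
  | .triv _ ε => ε
  | .arrows l => st.τ l.head!

/-- Length of a thread. -/
def Thread.len : Thread → ℕ
  | .triv _ _ => 0
  | .arrows l => l.length

/-- A path in `𝚫` of positive length (no two consecutive arrows in `R`). -/
def IsPermList (Q : QuivRel) (l : List ℕ) : Prop :=
  IsPathList Q l ∧ l.Chain' (fun a b => (a, b) ∉ Q.rel)

/-- An antipath in `𝚫` of positive length (all consecutive pairs in `R`). -/
def IsAntiList (Q : QuivRel) (l : List ℕ) : Prop :=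
  l ≠ [] ∧ (∀ a ∈ l, a ∈ Q.A) ∧ l.Chain' (fun a b => (a, b) ∈ Q.rel)

/-- A thread is a path in `𝚫` (including trivial ones). -/
def IsPathThread (Q : QuivRel) : Thread → Prop
  | .triv x ε => x ∈ Q.V ∧ (ε = 1 ∨ ε = -1)
  | .arrows l => IsPermList Q l

/-- A thread is an antipath in `𝚫` (including trivial ones). -/
def IsAntiThread (Q : QuivRel) : Thread → Prop
  | .triv x ε => x ∈ Q.V ∧ (ε = 1 ∨ ε = -1)
  | .arrows l => IsAntiList Q l

/-- `w ∈ ℳ`: `w` is a maximal path of `𝚫`. -/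
def InM (Q : QuivRel) (st : SigmaTau Q) (w : Thread) : Prop :=
  IsPathThread Q w ∧
  (¬ ∃ a ∈ Q.A, Q.src a = w.target Q ∧ st.σ a = -(w.tauPath st)) ∧
  (¬ ∃ b ∈ Q.A, Q.tgt b = w.source Q ∧ st.τ b = -(w.sigma st))

/-- `w ∈ 𝒩`: `w` is a maximal antipath of `𝚫`. -/
def InN (Q : QuivRel) (st : SigmaTau Q) (w : Thread) : Prop :=
  IsAntiThread Q w ∧
  (¬ ∃ a ∈ Q.A, Q.src a = w.target Q ∧ st.σ a = w.tauAnti st) ∧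
  (¬ ∃ b ∈ Q.A, Q.tgt b = w.source Q ∧ st.τ b = w.sigma st)

/-- The graph of the bijection `Φ = φ ∘ ψ : 𝒩 → 𝒩`:  `PhiRel Q st w w'` holds
iff `w, w' ∈ 𝒩` and the maximal path `ψ w` (with `s(ψw) = sw`, `σ(ψw) = -σw`)
satisfies `t w' = t (ψ w)` and `τ w' = -τ(ψ w)`, i.e. `w' = φ (ψ w) = Φ w`. -/
def PhiRel (Q : QuivRel) (st : SigmaTau Q) (w w' : Thread) : Prop :=
  InN Q st w ∧ InN Q st w' ∧
  ∃ m : Thread, InM Q st m ∧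
    m.source Q = w.source Q ∧ m.sigma st = -(w.sigma st) ∧
    w'.target Q = m.target Q ∧ w'.tauAnti st = -(m.tauPath st)

/-- `O` is an orbit of the `ℤ`-action on `𝒩` induced by `Φ`. -/
def NOrbit (Q : QuivRel) (st : SigmaTau Q) (O : Set Thread) : Prop :=
  ∃ w, InN Q st w ∧ O = {w' | Relation.EqvGen (PhiRel Q st) w w'}

/-- `p(𝒪) = |𝒪|` for an orbit `𝒪 ∈ 𝒩/ℤ`. -/
noncomputable def pN (O : Set Thread) : ℕ := O.ncard

/-- `q(𝒪) = Σ_{ω ∈ 𝒪} ℓ(ω)` for an orbit `𝒪 ∈ 𝒩/ℤ`. -/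
noncomputable def qN (O : Set Thread) : ℕ := ∑ᶠ w ∈ O, Thread.len w

/-- `a ∈ 𝒞`: the arrow `a` occurs in no maximal antipath. -/
def InC (Q : QuivRel) (st : SigmaTau Q) (a : ℕ) : Prop :=
  a ∈ Q.A ∧ ¬ ∃ l : List ℕ, InN Q st (.arrows l) ∧ a ∈ l

/-- The graph of the bijection `Ψ : 𝒞 → 𝒞`. -/
def PsiRel (Q : QuivRel) (st : SigmaTau Q) (a b : ℕ) : Prop :=
  InC Q st a ∧ InC Q st b ∧ Q.tgt b = Q.src a ∧ st.τ b = st.σ a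

/-- `O` is an orbit of the `ℤ`-action on `𝒞` induced by `Ψ`. -/
def COrbit (Q : QuivRel) (st : SigmaTau Q) (O : Set ℕ) : Prop :=
  ∃ a, InC Q st a ∧ O = {b | Relation.EqvGen (PsiRel Q st) a b}

/-- The Avella-Alaminos–Geiss invariant `f_𝚫 : ℕ² → ℕ`:  `f_𝚫 (p,q)` counts the
orbits `𝒪 ∈ 𝒩/ℤ ⊔ 𝒞/ℤ` with `p(𝒪) = p` and `q(𝒪) = q`. -/
noncomputable def fInv (Q : QuivRel) (st : SigmaTau Q) : ℕ × ℕ → ℕ := fun pq =>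
  {O : Set Thread | NOrbit Q st O ∧ pN O = pq.1 ∧ qN O = pq.2}.ncard +
  {O : Set ℕ | COrbit Q st O ∧ pq.1 = 0 ∧ O.ncard = pq.2}.ncard

/-- `[p, q] : ℕ² → ℕ`, the characteristic function of `{(p, q)}`. -/
def charFn (p q : ℕ) : ℕ × ℕ → ℕ := fun pq => if pq = (p, q) then 1 else 0

/-- Tree type: `|Δ₀| = |Δ₁| + 1`. -/
def TreeType (Q : QuivRel) : Prop := Q.V.card = Q.A.card + 1

/-- Removing a set of arrows (keeping all vertices); relations containing a
removed arrow are discarded. -/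
def deleteArrows (Q : QuivRel) (S : Finset ℕ) : QuivRel where
  V := Q.V
  A := Q.A \ S
  src := Q.src
  tgt := Q.tgt
  rel := Q.rel.filter fun ρ => ρ.1 ∉ S ∧ ρ.2 ∉ S

/-- Branch arrow: removing it disconnects the quiver. -/
def BranchArrow (Q : QuivRel) (a : ℕ) : Prop :=
  a ∈ Q.A ∧ ¬ Connected (deleteArrows Q {a})

/-- Cycle arrow: removing it leaves the quiver connected. -/
def CycleArrow (Q : QuivRel) (a : ℕ) : Prop :=
  a ∈ Q.A ∧ Connected (deleteArrows Q {a})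

/-- Branch relation: a relation one of whose arrows is a branch arrow. -/
def BranchRel (Q : QuivRel) (ρ : ℕ × ℕ) : Prop :=
  ρ ∈ Q.rel ∧ (BranchArrow Q ρ.1 ∨ BranchArrow Q ρ.2)

/-- A relation `ρ = (α, β)` is isolated if the antipath `(α, β)` is a maximal
antipath, i.e. `ρ ∈ 𝒩`. -/
def Isolated (Q : QuivRel) (st : SigmaTau Q) (ρ : ℕ × ℕ) : Prop :=
  ρ ∈ Q.rel ∧ InN Q st (.arrows [ρ.1, ρ.2])

/-- `Q'` is obtained from `Q` by completing the relations from `R₀`, the new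
arrow attached to `ρ ∈ R₀` being `γ ρ`. -/
structure IsCompletion (Q : QuivRel) (R0 : Finset (ℕ × ℕ)) (γ : ℕ × ℕ → ℕ)
    (Q' : QuivRel) : Prop where
  subset : R0 ⊆ Q.rel
  fresh : ∀ ρ ∈ R0, γ ρ ∉ Q.A
  inj : ∀ ρ ∈ R0, ∀ ρ' ∈ R0, γ ρ = γ ρ' → ρ = ρ'
  V_eq : Q'.V = Q.V
  A_eq : Q'.A = Q.A ∪ R0.image γ
  src_old : ∀ a ∈ Q.A, Q'.src a = Q.src a
  tgt_old : ∀ a ∈ Q.A, Q'.tgt a = Q.tgt a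
  src_new : ∀ ρ ∈ R0, Q'.src (γ ρ) = Q.tgt ρ.1
  tgt_new : ∀ ρ ∈ R0, Q'.tgt (γ ρ) = Q.src ρ.2
  rel_eq : Q'.rel = Q.rel ∪ R0.image (fun ρ => (γ ρ, ρ.1)) ∪
      R0.image (fun ρ => (ρ.2, γ ρ))

/-- A 3-cycle: three pairwise distinct arrows forming an oriented cycle. -/
def Is3Cycle (Q : QuivRel) (a0 a1 a2 : ℕ) : Prop :=
  a0 ∈ Q.A ∧ a1 ∈ Q.A ∧ a2 ∈ Q.A ∧ a0 ≠ a1 ∧ a1 ≠ a2 ∧ a0 ≠ a2 ∧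
  Q.src a0 = Q.tgt a1 ∧ Q.src a1 = Q.tgt a2 ∧ Q.src a2 = Q.tgt a0

/-- A triangle: a 3-cycle all of whose three compositions are relations. -/
def IsTriangleTriple (Q : QuivRel) (a0 a1 a2 : ℕ) : Prop :=
  Is3Cycle Q a0 a1 a2 ∧ (a0, a1) ∈ Q.rel ∧ (a1, a2) ∈ Q.rel ∧ (a2, a0) ∈ Q.rel

/-- The (unordered) set of arrows of a triangle. -/
def TriangleSet (Q : QuivRel) (O : Finset ℕ) : Prop :=
  ∃ a0 a1 a2, O = {a0, a1, a2} ∧ IsTriangleTriple Q a0 a1 a2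

/-- Branch triangle: removing any two of its arrows disconnects the quiver. -/
def BranchTriangle (Q : QuivRel) (O : Finset ℕ) : Prop :=
  TriangleSet Q O ∧ ∀ S ⊆ O, S.card = 2 → ¬ Connected (deleteArrows Q S)

/-- Free relation: a relation neither of whose arrows lies in `𝒞`. -/
def FreeRel (Q : QuivRel) (st : SigmaTau Q) (ρ : ℕ × ℕ) : Prop :=
  ρ ∈ Q.rel ∧ ¬ InC Q st ρ.1 ∧ ¬ InC Q st ρ.2

/-- The class `𝒜`: gentle quivers with `f_𝚫 = m·[0,3] + [p+m+2, p]`. -/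
def ClassA (Q : QuivRel) (st : SigmaTau Q) : Prop :=
  IsGentle Q ∧ ∃ m p : ℕ, ∀ x, fInv Q st x = m * charFn 0 3 x + charFn (p + m + 2) p x

/-- The class `Ã`: gentle quivers with
`f_𝚫 = (m₁+m₂)·[0,3] + [p+m₁, p] + [q+m₂, q]`, `p+m₁ > 0`, `q+m₂ > 0`. -/
def ClassAtilde (Q : QuivRel) (st : SigmaTau Q) : Prop :=
  IsGentle Q ∧ ∃ m1 m2 p q : ℕ, 0 < p + m1 ∧ 0 < q + m2 ∧
    ∀ x, fInv Q st x =
      (m1 + m2) * charFn 0 3 x + charFn (p + m1) p x + charFn (q + m2) q x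

/-- Isomorphism of quivers with relations. -/
def IsoQR (Q Q' : QuivRel) : Prop :=
  ∃ fV fA : ℕ → ℕ,
    Set.BijOn fV ↑Q.V ↑Q'.V ∧ Set.BijOn fA ↑Q.A ↑Q'.A ∧
    (∀ a ∈ Q.A, Q'.src (fA a) = fV (Q.src a) ∧ Q'.tgt (fA a) = fV (Q.tgt a)) ∧
    (∀ a ∈ Q.A, ∀ b ∈ Q.A, ((a, b) ∈ Q.rel ↔ (fA a, fA b) ∈ Q'.rel))

/-- The quiver has no loops. -/
def NoLoops (Q : QuivRel) : Prop := ∀ a ∈ Q.A, Q.src a ≠ Q.tgt a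

/-- The reflection at `x` is defined: every arrow starting at `x` admits a
(necessarily unique) companion arrow ending at `x` not bound by a relation. -/
def CanReflect (Q : QuivRel) (x : ℕ) : Prop :=
  x ∈ Q.V ∧ ∀ a ∈ Q.A, Q.src a = x → ∃ b ∈ Q.A, Q.tgt b = x ∧ (a, b) ∉ Q.rel

/-- `Q'` is the reflection of the gentle loop-free quiver `Q` at the vertex
`x`, following Brenner–Butler tilting. -/
def IsReflection (Q : QuivRel) (x : ℕ) (Q' : QuivRel) : Prop :=
  IsGentle Q ∧ NoLoops Q ∧ CanReflect Q x ∧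
  Q'.V = Q.V ∧ Q'.A = Q.A ∧
  (∀ a ∈ Q.A, Q.tgt a = x → Q'.src a = x ∧ Q'.tgt a = Q.src a) ∧
  (∀ a ∈ Q.A, Q.src a = x →
    ∀ b ∈ Q.A, Q.tgt b = x → (a, b) ∉ Q.rel → Q'.src a = Q.src b) ∧
  (∀ a ∈ Q.A, Q.tgt a ≠ x → Q.src a ≠ x → Q'.src a = Q.src a) ∧
  (∀ a ∈ Q.A, Q.tgt a ≠ x →
    ((∃ b ∈ Q.A, Q.tgt b = x ∧ Q.src b = Q.tgt a ∧ (b, a) ∈ Q.rel) → Q'.tgt a = x) ∧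
    ((¬ ∃ b ∈ Q.A, Q.tgt b = x ∧ Q.src b = Q.tgt a ∧ (b, a) ∈ Q.rel) →
      Q'.tgt a = Q.tgt a)) ∧
  (∀ a b : ℕ, (a, b) ∈ Q'.rel ↔
    (((a, b) ∈ Q.rel ∧ Q.tgt a ≠ x ∧ Q.src a ≠ x) ∨
     (a ∈ Q.A ∧ b ∈ Q.A ∧ Q.src a = x ∧ Q.tgt b = x ∧ (a, b) ∉ Q.rel) ∨
     (a ∈ Q.A ∧ b ∈ Q.A ∧ Q.tgt a = x ∧
       ∃ c ∈ Q.A, c ≠ a ∧ Q.tgt c = x ∧ Q.src c = Q.tgt b ∧ (c, b) ∈ Q.rel)))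

/-- The opposite quiver with relations. -/
def opQR (Q : QuivRel) : QuivRel where
  V := Q.V
  A := Q.A
  src := Q.tgt
  tgt := Q.src
  rel := Q.rel.image fun ρ => (ρ.2, ρ.1)

/-- Coreflection: the dual of reflection. -/
def IsCoreflection (Q : QuivRel) (x : ℕ) (Q' : QuivRel) : Prop :=
  IsReflection (opQR Q) x (opQR Q')

/-- One step of reflection equivalence: a reflection, a coreflection, or an
isomorphism of quivers with relations. -/
def RefStep (Q Q' : QuivRel) : Prop :=
  (∃ x, IsReflection Q x Q') ∨ (∃ x, IsCoreflection Q x Q') ∨ IsoQR Q Q'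

/-- Reflection equivalence: a finite sequence of reflections/coreflections,
up to isomorphism of quivers with relations. -/
def RefEquiv : QuivRel → QuivRel → Prop := Relation.ReflTransGen RefStep

/-- A cyclic orientation of a `1`-cycle quiver without branch arrows (i.e. a
cycle): enumerations of the vertices and arrows by `ZMod n` such that the
`i`-th arrow joins the `i`-th and `(i+1)`-st vertices. -/
structure CyclicOrientation (Q : QuivRel) (n : ℕ) where
  ev : ZMod n → ℕ
  ea : ZMod n → ℕ
  ev_mem : ∀ i, ev i ∈ Q.V
  ea_mem : ∀ i, ea i ∈ Q.A
  ev_inj : Function.Injective ev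
  ea_inj : Function.Injective ea
  ev_surj : ∀ v ∈ Q.V, ∃ i, ev i = v
  ea_surj : ∀ a ∈ Q.A, ∃ i, ea i = a
  compat : ∀ i : ZMod n,
    (Q.src (ea i) = ev i ∧ Q.tgt (ea i) = ev (i + 1)) ∨
    (Q.src (ea i) = ev (i + 1) ∧ Q.tgt (ea i) = ev i)

/-- Clockwise arrow with respect to a cyclic orientation. -/
def Clockwise (Q : QuivRel) {n : ℕ} (co : CyclicOrientation Q n) (a : ℕ) : Prop :=
  a ∈ Q.A ∧ ∃ i : ZMod n, co.ea i = a ∧ Q.src a = co.ev i ∧ Q.tgt a = co.ev (i + 1)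

/-- Anticlockwise arrow with respect to a cyclic orientation. -/
def Anticlockwise (Q : QuivRel) {n : ℕ} (co : CyclicOrientation Q n) (a : ℕ) : Prop :=
  a ∈ Q.A ∧ ∃ i : ZMod n, co.ea i = a ∧ Q.src a = co.ev (i + 1) ∧ Q.tgt a = co.ev i

end GentleQuiv

namespace GentleQuiv

/-!
The cycle space of a connected quiver has dimension `|Δ₁| - |Δ₀| + 1`. Every maximal antipath is
determined by its end `(t, τ)`, which is not of the form `(sα, σα)` for an arrow `α`; this gives
`|𝒩| + |Δ₁| ≤ 2 |Δ₀|`. Every arrow lies in `𝒞` or on a maximal antipath. For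
`f_𝚫 = m·[0,3] + [p+m+2, p]` this means `|𝒩| = p + m + 2` and `|Δ₁| ≤ 3m + p`, so the cycle space
has dimension at most `m`. The `m` orbits of `Ψ` on `𝒞` are disjoint oriented 3-cycles, so their
indicator functions form a basis of it. The indicator function of any 3-cycle is then a combination
of these, hence the 3-cycle contains, and so is, one of the orbits. Finally `Ψ` must run through the
3-cycle in the given direction: otherwise one of its arrows would be a loop fixed by `Ψ`.
-/

theorem iff_of_eqvGen {α : Type*} {r : α → α → Prop} {p : α → Prop}
    (hp : ∀ a b, r a b → (p a ↔ p b)) {a b : α} (h : Relation.EqvGen r a b) : p a ↔ p b := by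
  induction h with
  | rel a b h => exact hp a b h
  | refl => rfl
  | symm _ _ _ ih => exact ih.symm
  | trans _ _ _ _ _ ih₁ ih₂ => exact ih₁.trans ih₂

section Chains

variable {α : Type*} {r : α → α → Prop}

theorem tail_eq_of_isChain (hr : Relator.RightUnique r) {x : α} {l l' : List α}
    (h : (x :: l).IsChain r) (h' : (x :: l').IsChain r)
    (hlast : ∀ y, ¬ r ((x :: l).getLast (List.cons_ne_nil x l)) y)
    (hlast' : ∀ y, ¬ r ((x :: l').getLast (List.cons_ne_nil x l')) y) : l = l' := by
  induction l generalizing x l' with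
  | nil =>
    cases l' with
    | nil => rfl
    | cons z l' => exact absurd (List.isChain_cons_cons.1 h').1 (hlast z)
  | cons y l ih =>
    cases l' with
    | nil => exact absurd (List.isChain_cons_cons.1 h).1 (hlast' y)
    | cons z l' =>
      obtain ⟨hy, h⟩ := List.isChain_cons_cons.1 h
      obtain ⟨hz, h'⟩ := List.isChain_cons_cons.1 h'
      obtain rfl := hr hy hz
      rw [ih h h' (by simpa only [List.getLast_cons_cons] using hlast)
        (by simpa only [List.getLast_cons_cons] using hlast')]

theorem nodup_of_isChain (hr : Relator.RightUnique r) {l : List α} (h : l.IsChain r)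
    (hlast : ∀ (hl : l ≠ []) (y : α), ¬ r (l.getLast hl) y) : l.Nodup := by
  induction l with
  | nil => exact List.nodup_nil
  | cons x l ih =>
    have hl : ∀ (hl : l ≠ []) (y : α), ¬ r (l.getLast hl) y := fun hl =>
      List.getLast_cons hl ▸ hlast (List.cons_ne_nil x l)
    refine List.nodup_cons.2 ⟨fun hx => ?_, ih h.tail hl⟩
    obtain ⟨u, v, rfl⟩ := List.append_of_mem hx
    -- The continuation of `x` is unique, so a second occurrence would have a tail as long as `l`.
    have hv : u ++ x :: v = v := by
      refine tail_eq_of_isChain hr h h.tail.right_of_append (hlast (List.cons_ne_nil _ _)) ?_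
      simpa only [List.getLast_append_of_right_ne_nil _ _ (List.cons_ne_nil x v)] using
        hl (List.append_ne_nil_of_right_ne_nil _ (List.cons_ne_nil x v))
    have := congrArg List.length hv
    simp only [List.length_append, List.length_cons] at this
    omega

theorem exists_rel_of_mem_of_isChain_cons {x b : α} {l : List α} (h : (x :: l).IsChain r)
    (hb : b ∈ l) : ∃ a ∈ x :: l, r a b := by
  obtain ⟨u, v, rfl⟩ := List.append_of_mem hb
  exact ⟨(x :: u).getLast (List.cons_ne_nil x u),
    List.mem_append_left (b :: v) (List.getLast_mem (List.cons_ne_nil x u)),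
    List.IsChain.rel_getLast_head_of_append (l₁ := x :: u) (l₂ := b :: v) h
      (List.cons_ne_nil x u) (List.cons_ne_nil b v)⟩

end Chains

section IndicatorSpan

variable {k α ι : Type*} [Ring k] {s : ι → Set α}

theorem linearIndependent_indicator_one (hs : ∀ i, (s i).Nonempty)
    (hd : Pairwise (Function.onFun Disjoint s)) :
    LinearIndependent k fun i => (s i).indicator (1 : α → k) := by
  refine linearIndependent_iff'.2 fun t c hc i hi => ?_
  obtain ⟨a, ha⟩ := hs i
  have hoff : ∀ j ∈ t, j ≠ i → c j * (s j).indicator 1 a = 0 := fun j _ hji => by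
    rw [Set.indicator_of_notMem (Set.disjoint_right.1 (hd hji) ha), mul_zero]
  have hsum : ∑ j ∈ t, c j * (s j).indicator 1 a = 0 := by
    simpa only [Finset.sum_apply, Pi.smul_apply, smul_eq_mul, Pi.zero_apply] using congrFun hc a
  rw [Finset.sum_eq_single_of_mem i hi hoff, Set.indicator_of_mem ha] at hsum
  simpa only [Pi.one_apply, mul_one] using hsum

theorem exists_subset_support_of_mem_span_indicator (hd : Pairwise (Function.onFun Disjoint s))
    {z : α → k} (hz : z ∈ Submodule.span k (Set.range fun i => (s i).indicator (1 : α → k)))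
    {a : α} (ha : z a ≠ 0) : ∃ i, a ∈ s i ∧ s i ⊆ Function.support z := by
  obtain ⟨c, rfl⟩ := Finsupp.mem_span_range_iff_exists_finsupp.1 hz
  have happly : ∀ b, (c.sum fun i x => x • (s i).indicator (1 : α → k)) b =
      ∑ i ∈ c.support, c i * (s i).indicator 1 b := fun b => by
    simp only [Finsupp.sum, Finset.sum_apply, Pi.smul_apply, smul_eq_mul]
  obtain ⟨i, -, hi⟩ := Finset.exists_ne_zero_of_sum_ne_zero (happly a ▸ ha)
  have hai : a ∈ s i := Set.mem_of_indicator_ne_zero (right_ne_zero_of_mul hi)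
  refine ⟨i, hai, fun b hbi => ?_⟩
  have hab : ∀ j, (s j).indicator (1 : α → k) b = (s j).indicator 1 a := fun j => by
    by_cases hij : i = j
    · subst hij
      rw [Set.indicator_of_mem hai, Set.indicator_of_mem hbi, Pi.one_apply, Pi.one_apply]
    · have hdj := Set.disjoint_left.1 (hd hij)
      rw [Set.indicator_of_notMem (hdj hai), Set.indicator_of_notMem (hdj hbi)]
  rw [Function.mem_support, happly]
  simpa only [hab, ← happly] using ha

end IndicatorSpan

/-! ### The cycle space -/

/-- The boundary map of the underlying graph: it sends the arrow `a` to `t a - s a`. Vertices are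
kept as natural numbers, so that no proof of `t a, s a ∈ Q.V` is needed. -/
noncomputable def boundary (Q : QuivRel) : (Q.A → ℚ) →ₗ[ℚ] (ℕ →₀ ℚ) :=
  Fintype.linearCombination ℚ fun a : Q.A =>
    Finsupp.single (Q.tgt a) 1 - Finsupp.single (Q.src a) 1

/-- The cycle space of the underlying graph, i.e. its first homology with rational coefficients. -/
noncomputable def cycleSpace (Q : QuivRel) : Submodule ℚ (Q.A → ℚ) := LinearMap.ker (boundary Q)

theorem single_sub_single_mem_range_boundary {Q : QuivRel} {x y : ℕ}
    (h : Relation.ReflTransGen (Adj Q) x y) :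
    Finsupp.single y 1 - Finsupp.single x 1 ∈ LinearMap.range (boundary Q) := by
  have hadj : ∀ {a}, a ∈ Q.A →
      Finsupp.single (Q.tgt a) 1 - Finsupp.single (Q.src a) 1 ∈ LinearMap.range (boundary Q) := by
    intro a ha
    rw [boundary, Fintype.range_linearCombination]
    exact Submodule.subset_span ⟨⟨a, ha⟩, rfl⟩
  induction h with
  | refl => rw [sub_self]; exact zero_mem _
  | @tail y z _ hyz ih =>
    rw [← sub_add_sub_cancel _ (Finsupp.single y 1)]
    refine add_mem ?_ ih
    obtain ⟨a, ha, ⟨rfl, rfl⟩ | ⟨rfl, rfl⟩⟩ := hyz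
    · exact hadj ha
    · rw [← neg_sub]
      exact neg_mem (hadj ha)

theorem card_vertices_le_finrank_range_boundary {Q : QuivRel} (hQ : Connected Q) :
    Q.V.card ≤ Module.finrank ℚ (LinearMap.range (boundary Q)) + 1 := by
  obtain hV | ⟨x, hx⟩ := Q.V.eq_empty_or_nonempty
  · rw [hV, Finset.card_empty]
    exact Nat.zero_le _
  let δ : Q.V → (ℕ →₀ ℚ) := fun v => Finsupp.single v 1
  have hspan : Submodule.span ℚ (Set.range δ) ≤
      LinearMap.range (boundary Q) ⊔ ℚ ∙ (Finsupp.single x 1 : ℕ →₀ ℚ) := by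
    rw [Submodule.span_le]
    rintro _ ⟨v, rfl⟩
    exact Submodule.mem_sup.2 ⟨_, single_sub_single_mem_range_boundary (hQ x hx v v.2), _,
      Submodule.mem_span_singleton_self _, sub_add_cancel _ _⟩
  have hδ : LinearIndependent ℚ δ :=
    (Finsupp.linearIndependent_single_one ℚ ℕ).comp _ Subtype.val_injective
  calc Q.V.card = Module.finrank ℚ (Submodule.span ℚ (Set.range δ)) := by
        rw [finrank_span_eq_card hδ, Fintype.card_coe]
    _ ≤ _ := Submodule.finrank_mono hspan
    _ ≤ _ := Submodule.finrank_add_le_finrank_add_finrank _ _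
    _ ≤ Module.finrank ℚ (LinearMap.range (boundary Q)) + 1 := by
        gcongr
        refine (finrank_span_le_card _).trans_eq ?_
        rw [Set.toFinset_singleton, Finset.card_singleton]

theorem finrank_cycleSpace_add_card_le {Q : QuivRel} (hQ : Connected Q) :
    Module.finrank ℚ (cycleSpace Q) + Q.V.card ≤ Q.A.card + 1 := by
  have hrank := LinearMap.finrank_range_add_finrank_ker (boundary Q)
  rw [Module.finrank_fintype_fun_eq_card, Fintype.card_coe] at hrank
  have := card_vertices_le_finrank_range_boundary hQ
  rw [cycleSpace]
  omega

theorem boundary_indicator_one {Q : QuivRel} {S : Finset ℕ} (hS : S ⊆ Q.A) :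
    boundary Q (((↑) ⁻¹' (S : Set ℕ) : Set Q.A).indicator 1) =
      ∑ a ∈ S, (Finsupp.single (Q.tgt a) 1 - Finsupp.single (Q.src a) 1) := by
  classical
  rw [boundary, Fintype.linearCombination_apply, ← Finset.inter_eq_right.2 hS,
    ← Finset.filter_mem_eq_inter, Finset.sum_filter, ← Finset.sum_coe_sort Q.A]
  refine Finset.sum_congr rfl fun a _ => ?_
  simp only [Set.indicator_apply, Set.mem_preimage, Finset.mem_coe, Pi.one_apply, ite_smul,
    one_smul, zero_smul, Finset.mem_filter, a.2, true_and]

theorem indicator_one_mem_cycleSpace_iff {Q : QuivRel} {S : Finset ℕ} (hS : S ⊆ Q.A) :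
    ((↑) ⁻¹' (S : Set ℕ) : Set Q.A).indicator 1 ∈ cycleSpace Q ↔
      ∑ a ∈ S, Finsupp.single (Q.tgt a) (1 : ℚ) = ∑ a ∈ S, Finsupp.single (Q.src a) 1 := by
  rw [cycleSpace, LinearMap.mem_ker, boundary_indicator_one hS, Finset.sum_sub_distrib,
    sub_eq_zero]

/-! ### Threads and orbits in a gentle quiver -/

section Gentle

variable {Q : QuivRel} {st : SigmaTau Q}

theorem SigmaTau.src_injOn (st : SigmaTau Q) :
    Set.InjOn (fun a => (Q.src a, st.σ a)) (Q.A : Set ℕ) := by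
  intro a ha b hb hab
  obtain ⟨hs, hσ⟩ := Prod.mk.inj hab
  by_contra hne
  have := st.σ_src a ha b hb hne hs
  have := st.σ_pm a ha
  omega

theorem SigmaTau.tgt_injOn (st : SigmaTau Q) :
    Set.InjOn (fun a => (Q.tgt a, st.τ a)) (Q.A : Set ℕ) := by
  intro a ha b hb hab
  obtain ⟨ht, hτ⟩ := Prod.mk.inj hab
  by_contra hne
  have := st.τ_tgt a ha b hb hne ht
  have := st.τ_pm a ha
  omega

theorem IsGentle.src_mem (hG : IsGentle Q) {a : ℕ} (ha : a ∈ Q.A) : Q.src a ∈ Q.V :=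
  (hG.2.1 a ha).1

theorem IsGentle.tgt_mem (hG : IsGentle Q) {a : ℕ} (ha : a ∈ Q.A) : Q.tgt a ∈ Q.V :=
  (hG.2.1 a ha).2

theorem IsGentle.connected (hG : IsGentle Q) : Connected Q := hG.2.2.1

theorem IsGentle.mem_rel_iff (hG : IsGentle Q) (st : SigmaTau Q) {a b : ℕ} :
    (a, b) ∈ Q.rel ↔ a ∈ Q.A ∧ b ∈ Q.A ∧ Q.src a = Q.tgt b ∧ st.σ a = st.τ b := by
  refine ⟨fun hab => ?_, fun ⟨ha, hb, hsrc, hσ⟩ => (st.rel_iff a ha b hb hsrc).2 hσ⟩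
  obtain ⟨ha, hb, hsrc⟩ := hG.2.2.2.1 _ hab
  exact ⟨ha, hb, hsrc, (st.rel_iff a ha b hb hsrc).1 hab⟩

theorem IsGentle.left_mem_of_rel (hG : IsGentle Q) {a b : ℕ} (hab : (a, b) ∈ Q.rel) : a ∈ Q.A :=
  (hG.2.2.2.1 _ hab).1

theorem IsGentle.right_mem_of_rel (hG : IsGentle Q) {a b : ℕ} (hab : (a, b) ∈ Q.rel) :
    b ∈ Q.A :=
  (hG.2.2.2.1 _ hab).2.1

theorem IsGentle.rel_leftUnique (hG : IsGentle Q) :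
    Relator.LeftUnique fun a b => (a, b) ∈ Q.rel := by
  intro a b c hac hbc
  have hcard := hG.2.2.2.2.2.2.2.2.1 c (hG.right_mem_of_rel hac)
  exact Finset.card_le_one.1 hcard a (Finset.mem_filter.2 ⟨hG.left_mem_of_rel hac, hac⟩) b
    (Finset.mem_filter.2 ⟨hG.left_mem_of_rel hbc, hbc⟩)

theorem IsGentle.rel_rightUnique (hG : IsGentle Q) :
    Relator.RightUnique fun a b => (a, b) ∈ Q.rel := by
  intro a b c hab hac
  have hcard := hG.2.2.2.2.2.2.2.2.2.1 a (hG.left_mem_of_rel hab)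
  exact Finset.card_le_one.1 hcard b (Finset.mem_filter.2 ⟨hG.right_mem_of_rel hab, hab⟩) c
    (Finset.mem_filter.2 ⟨hG.right_mem_of_rel hac, hac⟩)

theorem IsGentle.exists_rel_left_iff (hG : IsGentle Q) (st : SigmaTau Q) {x : ℕ} (hx : x ∈ Q.A) :
    (∃ a, (a, x) ∈ Q.rel) ↔ ∃ a ∈ Q.A, Q.src a = Q.tgt x ∧ st.σ a = st.τ x := by
  simp only [hG.mem_rel_iff st, hx, true_and]

theorem IsGentle.exists_rel_right_iff (hG : IsGentle Q) (st : SigmaTau Q) {x : ℕ}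
    (hx : x ∈ Q.A) :
    (∃ b, (x, b) ∈ Q.rel) ↔ ∃ b ∈ Q.A, Q.tgt b = Q.src x ∧ st.τ b = st.σ x := by
  simp only [hG.mem_rel_iff st, hx, true_and, eq_comm]

theorem inN_arrows_cons_iff (hG : IsGentle Q) {x : ℕ} {l : List ℕ} :
    InN Q st (.arrows (x :: l)) ↔ (∀ a ∈ x :: l, a ∈ Q.A) ∧
      (x :: l).IsChain (fun a b => (a, b) ∈ Q.rel) ∧ (∀ a, (a, x) ∉ Q.rel) ∧
      ∀ b, ((x :: l).getLast (List.cons_ne_nil x l), b) ∉ Q.rel := by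
  rw [← and_assoc, ← not_exists, ← not_exists]
  have hanti : IsAntiThread Q (.arrows (x :: l)) ↔
      (∀ a ∈ x :: l, a ∈ Q.A) ∧ (x :: l).IsChain fun a b => (a, b) ∈ Q.rel :=
    and_iff_right (List.cons_ne_nil x l)
  refine (and_congr_left' hanti).trans (and_congr_right fun ⟨hA, _⟩ => ?_)
  rw [hG.exists_rel_left_iff st (hA x List.mem_cons_self),
    hG.exists_rel_right_iff st (hA _ (List.getLast_mem _))]
  rfl

/-- The end of an antipath `w` as the pair `(tw, τw)`. It is the obstruction to prolonging `w` at
its target: an arrow `a` can be added there exactly when `(sa, σa)` is this pair. -/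
def Thread.antiEnd (st : SigmaTau Q) (w : Thread) : ℕ × ℤ :=
  (w.target Q, w.tauAnti st)

theorem antiEnd_arrows_ne_antiEnd_triv (hG : IsGentle Q) {l : List ℕ} {x : ℕ} {ε : ℤ}
    (hl : InN Q st (.arrows l)) (hx : InN Q st (.triv x ε)) :
    (Thread.arrows l).antiEnd st ≠ (Thread.triv x ε).antiEnd st := by
  obtain ⟨y, l, rfl⟩ := List.exists_cons_of_ne_nil hl.1.1
  intro h
  obtain ⟨ht, hτ⟩ := Prod.mk.inj h
  exact hx.2.2 ⟨y, ((inN_arrows_cons_iff hG).1 hl).1 y List.mem_cons_self, ht, hτ⟩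

theorem antiEnd_injOn (hG : IsGentle Q) : Set.InjOn (Thread.antiEnd st) {w | InN Q st w} := by
  rintro (⟨x, ε⟩ | l) hw (⟨x', ε'⟩ | l') hw' h
  · obtain ⟨hx, hε⟩ := Prod.mk.inj h
    exact congrArg₂ Thread.triv hx hε
  · exact (antiEnd_arrows_ne_antiEnd_triv hG hw' hw h.symm).elim
  · exact (antiEnd_arrows_ne_antiEnd_triv hG hw hw' h).elim
  obtain ⟨y, l, rfl⟩ := List.exists_cons_of_ne_nil hw.1.1
  obtain ⟨y', l', rfl⟩ := List.exists_cons_of_ne_nil hw'.1.1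
  obtain ⟨hA, hchain, -, hlast⟩ := (inN_arrows_cons_iff hG).1 hw
  obtain ⟨hA', hchain', -, hlast'⟩ := (inN_arrows_cons_iff hG).1 hw'
  obtain rfl : y = y' := st.tgt_injOn (hA y List.mem_cons_self) (hA' y' List.mem_cons_self) h
  rw [tail_eq_of_isChain hG.rel_rightUnique hchain hchain' hlast hlast']

theorem antiEnd_mem_product (hG : IsGentle Q) {w : Thread} (hw : InN Q st w) :
    w.antiEnd st ∈ Q.V ×ˢ ({1, -1} : Finset ℤ) := by
  rw [Finset.mem_product, Finset.mem_insert, Finset.mem_singleton]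
  obtain ⟨x, ε⟩ | l := w
  · exact hw.1
  · obtain ⟨y, l, rfl⟩ := List.exists_cons_of_ne_nil hw.1.1
    have hy : y ∈ Q.A := ((inN_arrows_cons_iff hG).1 hw).1 y List.mem_cons_self
    exact ⟨hG.tgt_mem hy, st.τ_pm y hy⟩

theorem inN_finite (hG : IsGentle Q) : {w | InN Q st w}.Finite :=
  Set.Finite.of_injOn (fun _ hw => antiEnd_mem_product hG hw) (antiEnd_injOn hG)
    (Finset.finite_toSet _)

theorem ncard_inN_add_card_le (hG : IsGentle Q) :
    {w | InN Q st w}.ncard + Q.A.card ≤ 2 * Q.V.card := by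
  classical
  let starts : Finset (ℕ × ℤ) := Q.A.image fun a => (Q.src a, st.σ a)
  have hstarts : starts ⊆ Q.V ×ˢ {1, -1} := by
    refine Finset.image_subset_iff.2 fun a ha => ?_
    rw [Finset.mem_product, Finset.mem_insert, Finset.mem_singleton]
    exact ⟨hG.src_mem ha, st.σ_pm a ha⟩
  have hends : {w | InN Q st w}.ncard ≤ ((Q.V ×ˢ {1, -1}) \ starts).card := by
    rw [← Set.ncard_coe_finset]
    refine Set.ncard_le_ncard_of_injOn (Thread.antiEnd st) (fun w hw => ?_) (antiEnd_injOn hG)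
      (Finset.finite_toSet _)
    refine Finset.mem_sdiff.2 ⟨antiEnd_mem_product hG hw, fun hmem => hw.2.1 ?_⟩
    obtain ⟨a, ha, haw⟩ := Finset.mem_image.1 hmem
    exact ⟨a, ha, Prod.mk.inj haw⟩
  have hcard : starts.card = Q.A.card := Finset.card_image_of_injOn st.src_injOn
  have hprod : (Q.V ×ˢ ({1, -1} : Finset ℤ)).card = Q.V.card * 2 := Finset.card_product _ _
  have := Finset.card_sdiff_add_card_eq_card hstarts
  omega

theorem InC.exists_antipath (hG : IsGentle Q) {a : ℕ} (ha : InC Q st a)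
    (hlast : ∀ b, (a, b) ∉ Q.rel) (n : ℕ) : ∃ x l, l.length = n ∧ (∀ c ∈ x :: l, c ∈ Q.A) ∧
      (x :: l).IsChain (fun a b => (a, b) ∈ Q.rel) ∧
      (x :: l).getLast (List.cons_ne_nil x l) = a := by
  induction n with
  | zero => exact ⟨a, [], rfl, List.forall_mem_singleton.2 ha.1, List.isChain_singleton a, rfl⟩
  | succ n ih =>
    obtain ⟨x, l, rfl, hA, hchain, rfl⟩ := ih
    obtain ⟨c, hc⟩ : ∃ c, (c, x) ∈ Q.rel := by
      by_contra! hfirst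
      exact ha.2 ⟨x :: l, (inN_arrows_cons_iff hG).2 ⟨hA, hchain, hfirst, hlast⟩,
        List.getLast_mem _⟩
    exact ⟨c, x :: l, rfl, List.forall_mem_cons.2 ⟨hG.left_mem_of_rel hc, hA⟩,
      List.isChain_cons_cons.2 ⟨hc, hchain⟩, List.getLast_cons_cons⟩

theorem InC.exists_rel (hG : IsGentle Q) {a : ℕ} (ha : InC Q st a) : ∃ b, (a, b) ∈ Q.rel := by
  by_contra! hlast
  obtain ⟨x, l, hlen, hA, hchain, rfl⟩ := ha.exists_antipath hG hlast Q.A.card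
  have hnodup : (x :: l).Nodup := nodup_of_isChain hG.rel_rightUnique hchain fun _ => hlast
  have hcard : (x :: l).length ≤ Q.A.card := by
    rw [← List.toFinset_card_of_nodup hnodup]
    exact Finset.card_le_card fun c hc => hA c (List.mem_toFinset.1 hc)
  rw [List.length_cons] at hcard
  omega

theorem InC.of_rel (hG : IsGentle Q) {a b : ℕ} (ha : InC Q st a) (hab : (a, b) ∈ Q.rel) :
    InC Q st b := by
  refine ⟨hG.right_mem_of_rel hab, fun ⟨l, hl, hbl⟩ => ?_⟩
  obtain ⟨x, l, rfl⟩ := List.exists_cons_of_ne_nil hl.1.1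
  obtain ⟨-, hchain, hfirst, -⟩ := (inN_arrows_cons_iff hG).1 hl
  obtain rfl | hbl := List.mem_cons.1 hbl
  · exact hfirst a hab
  · obtain ⟨c, hcl, hcb⟩ := exists_rel_of_mem_of_isChain_cons hchain hbl
    obtain rfl := hG.rel_leftUnique hab hcb
    exact ha.2 ⟨_, hl, hcl⟩

theorem psiRel_iff (hG : IsGentle Q) {a b : ℕ} :
    PsiRel Q st a b ↔ InC Q st a ∧ (a, b) ∈ Q.rel := by
  refine ⟨fun ⟨ha, hb, ht, hτ⟩ => ⟨ha, (hG.mem_rel_iff st).2 ⟨ha.1, hb.1, ht.symm, hτ.symm⟩⟩, ?_⟩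
  rintro ⟨ha, hab⟩
  obtain ⟨-, -, hsrc, hσ⟩ := (hG.mem_rel_iff st).1 hab
  exact ⟨ha, ha.of_rel hG hab, hsrc.symm, hσ.symm⟩

theorem COrbit.inC {O : Set ℕ} (hO : COrbit Q st O) {a : ℕ} (ha : a ∈ O) : InC Q st a := by
  obtain ⟨w, hw, rfl⟩ := hO
  exact (iff_of_eqvGen (fun _ _ h => iff_of_true h.1 h.2.1) ha).1 hw

theorem COrbit.subset_arrows {O : Set ℕ} (hO : COrbit Q st O) : O ⊆ Q.A :=
  fun _ ha => (hO.inC ha).1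

theorem COrbit.finite {O : Set ℕ} (hO : COrbit Q st O) : O.Finite :=
  Q.A.finite_toSet.subset hO.subset_arrows

theorem COrbit.nonempty {O : Set ℕ} (hO : COrbit Q st O) : O.Nonempty := by
  obtain ⟨w, -, rfl⟩ := hO
  exact ⟨w, .refl w⟩

theorem cOrbits_finite (Q : QuivRel) (st : SigmaTau Q) : {O | COrbit Q st O}.Finite :=
  Q.A.finite_toSet.finite_subsets.subset fun _ hO => hO.subset_arrows

theorem COrbit.eq_of_mem {O O' : Set ℕ} (hO : COrbit Q st O) (hO' : COrbit Q st O') {a : ℕ}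
    (ha : a ∈ O) (ha' : a ∈ O') : O = O' := by
  obtain ⟨w, -, rfl⟩ := hO
  obtain ⟨w', -, rfl⟩ := hO'
  have hww' : Relation.EqvGen (PsiRel Q st) w w' := .trans _ _ _ ha (.symm _ _ ha')
  exact Set.ext fun b => ⟨.trans _ _ _ (.symm _ _ hww'), .trans _ _ _ hww'⟩

theorem COrbit.mem_of_rel (hG : IsGentle Q) {O : Set ℕ} (hO : COrbit Q st O) {a b : ℕ}
    (ha : a ∈ O) (hab : (a, b) ∈ Q.rel) : b ∈ O := by
  have hψ : PsiRel Q st a b := (psiRel_iff hG).2 ⟨hO.inC ha, hab⟩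
  obtain ⟨w, -, rfl⟩ := hO
  exact .trans _ _ _ ha (.rel _ _ hψ)

theorem COrbit.exists_bijOn (hG : IsGentle Q) {O : Set ℕ} (hO : COrbit Q st O) :
    ∃ f : ℕ → ℕ, Set.BijOn f O O ∧ ∀ a ∈ O, (a, f a) ∈ Q.rel := by
  have hex : ∀ a, ∃ b, a ∈ O → (a, b) ∈ Q.rel := fun a => by
    by_cases ha : a ∈ O
    · exact ((hO.inC ha).exists_rel hG).imp fun _ hab _ => hab
    · exact ⟨a, fun h => (ha h).elim⟩
  choose f hf using hex
  have hmaps : Set.MapsTo f O O := fun a ha => hO.mem_of_rel hG ha (hf a ha)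
  refine ⟨f, (hO.finite.injOn_iff_bijOn_of_mapsTo hmaps).1 fun a ha b hb hab => ?_, hf⟩
  exact hG.rel_leftUnique (hf a ha) (hab ▸ hf b hb)

theorem COrbit.eq_singleton_of_rel_self (hG : IsGentle Q) {O : Set ℕ} (hO : COrbit Q st O)
    {a : ℕ} (ha : a ∈ O) (haa : (a, a) ∈ Q.rel) : O = {a} := by
  have hiff : ∀ b c, PsiRel Q st b c → (b = a ↔ c = a) := fun b c hbc => by
    have hbc := ((psiRel_iff hG).1 hbc).2
    refine ⟨?_, ?_⟩ <;> rintro rfl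
    · exact hG.rel_rightUnique hbc haa
    · exact hG.rel_leftUnique hbc haa
  obtain ⟨w, -, rfl⟩ := hO
  refine Set.eq_singleton_iff_unique_mem.2 ⟨ha, fun b hb => ?_⟩
  exact (iff_of_eqvGen hiff (.trans _ _ _ (.symm _ _ hb) ha)).2 rfl

theorem NOrbit.inN {O : Set Thread} (hO : NOrbit Q st O) {w : Thread} (hw : w ∈ O) :
    InN Q st w := by
  obtain ⟨v, hv, rfl⟩ := hO
  exact (iff_of_eqvGen (fun _ _ h => iff_of_true h.1 h.2.1) hw).1 hv

theorem nOrbits_finite (hG : IsGentle Q) : {O | NOrbit Q st O}.Finite :=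
  (inN_finite hG).finite_subsets.subset fun _ hO _ => hO.inN

theorem NOrbit.pN_pos (hG : IsGentle Q) {O : Set Thread} (hO : NOrbit Q st O) : 0 < pN O := by
  refine (Set.ncard_pos ((inN_finite hG).subset fun _ => hO.inN)).2 ?_
  obtain ⟨w, -, rfl⟩ := hO
  exact ⟨w, .refl w⟩

theorem eq_setOf_inN_of_nOrbits_eq_singleton {O : Set Thread} (hO : {O' | NOrbit Q st O'} = {O}) :
    O = {w | InN Q st w} := by
  have hO' : NOrbit Q st O := (Set.ext_iff.1 hO O).2 rfl
  refine Set.Subset.antisymm (fun _ => hO'.inN) fun w hw => ?_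
  rw [← (Set.ext_iff.1 hO {w' | Relation.EqvGen (PhiRel Q st) w w'}).1 ⟨w, hw, rfl⟩]
  exact .refl w

/-! ### The Avella-Alaminos–Geiss invariant -/

theorem fInv_zero_left (hG : IsGentle Q) (q : ℕ) :
    fInv Q st (0, q) = {O | COrbit Q st O ∧ O.ncard = q}.ncard := by
  have hempty : {O | NOrbit Q st O ∧ pN O = 0 ∧ qN O = q} = ∅ :=
    Set.eq_empty_of_forall_notMem fun _ hO => (hO.1.pN_pos hG).ne' hO.2.1
  simp only [fInv, hempty, Set.ncard_empty, zero_add, true_and]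

theorem fInv_of_ne_zero {p : ℕ} (hp : p ≠ 0) (q : ℕ) :
    fInv Q st (p, q) = {O | NOrbit Q st O ∧ pN O = p ∧ qN O = q}.ncard := by
  simp only [fInv, hp, false_and, and_false, Set.ofPred_false, Set.ncard_empty, add_zero]

/-- The arrows occurring in a thread; a trivial thread has none. -/
def Thread.arrowFinset : Thread → Finset ℕ
  | .triv _ _ => ∅
  | .arrows l => l.toFinset

theorem Thread.card_arrowFinset_le_len (w : Thread) : w.arrowFinset.card ≤ w.len := by
  obtain ⟨x, ε⟩ | l := w
  · exact Nat.zero_le _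
  · exact List.toFinset_card_le l

theorem arrows_subset_iUnion (Q : QuivRel) (st : SigmaTau Q) :
    (Q.A : Set ℕ) ⊆ (⋃ O ∈ {O | COrbit Q st O}, O) ∪
      ⋃ w ∈ {w | InN Q st w}, (w.arrowFinset : Set ℕ) := by
  intro a ha
  by_cases haC : InC Q st a
  · exact .inl <| Set.mem_biUnion (x := {b | Relation.EqvGen (PsiRel Q st) a b})
      ⟨a, haC, rfl⟩ (.refl a)
  · obtain ⟨l, hl, hal⟩ := not_not.1 (not_and.1 haC ha)
    have hal : a ∈ (Thread.arrows l).arrowFinset := List.mem_toFinset.2 hal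
    exact .inr (Set.mem_biUnion (x := .arrows l) hl hal)

theorem card_arrows_le (hG : IsGentle Q) :
    Q.A.card ≤ ∑ᶠ O ∈ {O | COrbit Q st O}, O.ncard + qN {w | InN Q st w} := by
  have hC := cOrbits_finite Q st
  have hN := inN_finite (st := st) hG
  calc Q.A.card = (Q.A : Set ℕ).ncard := (Set.ncard_coe_finset _).symm
    _ ≤ _ := Set.ncard_le_ncard (arrows_subset_iUnion Q st) <|
        (hC.biUnion fun _ hO => hO.finite).union (hN.biUnion fun _ _ => Finset.finite_toSet _)
    _ ≤ _ := Set.ncard_union_le _ _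
    _ ≤ ∑ᶠ O ∈ {O | COrbit Q st O}, O.ncard +
        ∑ᶠ w ∈ {w | InN Q st w}, (w.arrowFinset : Set ℕ).ncard :=
        add_le_add (hC.ncard_biUnion_le _) (hN.ncard_biUnion_le _)
    _ ≤ ∑ᶠ O ∈ {O | COrbit Q st O}, O.ncard + qN {w | InN Q st w} := by
        rw [qN, finsum_mem_eq_finite_toFinset_sum _ hN, finsum_mem_eq_finite_toFinset_sum _ hN]
        gcongr with w
        rw [Set.ncard_coe_finset]
        exact w.card_arrowFinset_le_len

section ClassA

variable {m p : ℕ}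

theorem COrbit.ncard_eq_three (hG : IsGentle Q)
    (hf : ∀ x, fInv Q st x = m * charFn 0 3 x + charFn (p + m + 2) p x) {O : Set ℕ}
    (hO : COrbit Q st O) : O.ncard = 3 := by
  have hpos : fInv Q st (0, O.ncard) ≠ 0 := by
    rw [fInv_zero_left hG]
    exact Set.ncard_ne_zero_of_mem (a := O) ⟨hO, rfl⟩
      ((cOrbits_finite Q st).subset fun _ h => h.1)
  by_contra hne
  exact hpos (by simp [hf, charFn, hne])

theorem ncard_cOrbits (hG : IsGentle Q)
    (hf : ∀ x, fInv Q st x = m * charFn 0 3 x + charFn (p + m + 2) p x) :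
    {O | COrbit Q st O}.ncard = m := by
  have hall : {O | COrbit Q st O ∧ O.ncard = 3} = {O | COrbit Q st O} :=
    Set.ext fun O => and_iff_left_of_imp fun hO => hO.ncard_eq_three hG hf
  rw [← hall, ← fInv_zero_left hG, hf]
  simp [charFn]

theorem NOrbit.pN_eq_and_qN_eq (hG : IsGentle Q)
    (hf : ∀ x, fInv Q st x = m * charFn 0 3 x + charFn (p + m + 2) p x) {O : Set Thread}
    (hO : NOrbit Q st O) : pN O = p + m + 2 ∧ qN O = p := by
  have hp := (hO.pN_pos hG).ne'
  have hpos : fInv Q st (pN O, qN O) ≠ 0 := by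
    rw [fInv_of_ne_zero hp]
    exact Set.ncard_ne_zero_of_mem (a := O) ⟨hO, rfl, rfl⟩
      ((nOrbits_finite hG).subset fun _ h => h.1)
  by_contra hne
  exact hpos (by simp [hf, charFn, hp, hne])

theorem nOrbits_eq_singleton (hG : IsGentle Q)
    (hf : ∀ x, fInv Q st x = m * charFn 0 3 x + charFn (p + m + 2) p x) :
    {O | NOrbit Q st O} = {{w | InN Q st w}} := by
  have hall : {O | NOrbit Q st O ∧ pN O = p + m + 2 ∧ qN O = p} = {O | NOrbit Q st O} :=
    Set.ext fun O => and_iff_left_of_imp fun hO => hO.pN_eq_and_qN_eq hG hf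
  have hone : {O | NOrbit Q st O}.ncard = 1 := by
    rw [← hall, ← fInv_of_ne_zero (by omega), hf]
    simp [charFn]
  obtain ⟨O, hO⟩ := Set.ncard_eq_one.1 hone
  rw [hO, eq_setOf_inN_of_nOrbits_eq_singleton hO]

theorem finsum_ncard_cOrbits (hG : IsGentle Q)
    (hf : ∀ x, fInv Q st x = m * charFn 0 3 x + charFn (p + m + 2) p x) :
    ∑ᶠ O ∈ {O | COrbit Q st O}, O.ncard = 3 * m := by
  have hC := cOrbits_finite Q st
  rw [finsum_mem_eq_finite_toFinset_sum _ hC, Finset.sum_congr rfl fun O hO =>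
    COrbit.ncard_eq_three hG hf (hC.mem_toFinset.1 hO), Finset.sum_const,
    ← Set.ncard_eq_toFinset_card _ hC, ncard_cOrbits hG hf, smul_eq_mul, mul_comm]

theorem finrank_cycleSpace_le (hG : IsGentle Q)
    (hf : ∀ x, fInv Q st x = m * charFn 0 3 x + charFn (p + m + 2) p x) :
    Module.finrank ℚ (cycleSpace Q) ≤ m := by
  have hNO : NOrbit Q st {w | InN Q st w} :=
    (Set.ext_iff.1 (nOrbits_eq_singleton hG hf) _).2 rfl
  obtain ⟨hpN, hqN⟩ := hNO.pN_eq_and_qN_eq hG hf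
  have hA : Q.A.card ≤ 3 * m + p := by
    rw [← finsum_ncard_cOrbits hG hf, ← hqN]
    exact card_arrows_le hG
  have hV : p + m + 2 + Q.A.card ≤ 2 * Q.V.card := by
    rw [← hpN]
    exact ncard_inN_add_card_le hG
  have := finrank_cycleSpace_add_card_le hG.connected
  omega

end ClassA

/-! ### Three-cycles -/

theorem COrbit.indicator_one_mem_cycleSpace (hG : IsGentle Q) {O : Set ℕ} (hO : COrbit Q st O) :
    ((↑) ⁻¹' O : Set Q.A).indicator 1 ∈ cycleSpace Q := by
  obtain ⟨f, hf, hrel⟩ := hO.exists_bijOn hG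
  lift O to Finset ℕ using hO.finite
  rw [indicator_one_mem_cycleSpace_iff (Finset.coe_subset.1 hO.subset_arrows)]
  refine (Finset.sum_nbij f hf.mapsTo hf.injOn hf.surjOn fun a ha => ?_).symm
  rw [((hG.mem_rel_iff st).1 (hrel a ha)).2.2.1]

theorem exists_cOrbit_subset_support (hG : IsGentle Q)
    (hdim : Module.finrank ℚ (cycleSpace Q) ≤ {O | COrbit Q st O}.ncard) {z : Q.A → ℚ}
    (hz : z ∈ cycleSpace Q) {a : Q.A} (ha : z a ≠ 0) :
    ∃ O, COrbit Q st O ∧ (↑) ⁻¹' O ⊆ Function.support z := by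
  have := (cOrbits_finite Q st).to_subtype
  have := Fintype.ofFinite {O | COrbit Q st O}
  let s : {O | COrbit Q st O} → Set Q.A := fun O => (↑) ⁻¹' O.1
  have hs : ∀ O, (s O).Nonempty := fun O => by
    obtain ⟨b, hb⟩ := O.2.nonempty
    exact ⟨⟨b, O.2.subset_arrows hb⟩, hb⟩
  have hd : Pairwise (Function.onFun Disjoint s) := fun O O' hne =>
    Set.disjoint_left.2 fun b hb hb' => hne (Subtype.ext (O.2.eq_of_mem O'.2 hb hb'))
  have hspan : Submodule.span ℚ (Set.range fun O => (s O).indicator (1 : Q.A → ℚ)) =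
      cycleSpace Q := by
    refine Submodule.eq_of_le_of_finrank_le (Submodule.span_le.2 ?_) ?_
    · rintro _ ⟨O, rfl⟩
      exact O.2.indicator_one_mem_cycleSpace hG
    · rwa [finrank_span_eq_card (linearIndependent_indicator_one hs hd), ← Nat.card_eq_fintype_card,
        Nat.card_coe_set_eq]
  obtain ⟨O, -, hO⟩ := exists_subset_support_of_mem_span_indicator hd (hspan ▸ hz) ha
  exact ⟨O, O.2, hO⟩

theorem Is3Cycle.rotate {a₀ a₁ a₂ : ℕ} (h : Is3Cycle Q a₀ a₁ a₂) : Is3Cycle Q a₁ a₂ a₀ := by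
  obtain ⟨ha₀, ha₁, ha₂, h₀₁, h₁₂, h₀₂, hs₀, hs₁, hs₂⟩ := h
  exact ⟨ha₁, ha₂, ha₀, h₁₂, h₀₂.symm, h₀₁.symm, hs₁, hs₂, hs₀⟩

theorem Is3Cycle.indicator_one_mem_cycleSpace {a₀ a₁ a₂ : ℕ} (h : Is3Cycle Q a₀ a₁ a₂) :
    ((↑) ⁻¹' ({a₀, a₁, a₂} : Set ℕ) : Set Q.A).indicator 1 ∈ cycleSpace Q := by
  obtain ⟨ha₀, ha₁, ha₂, h₀₁, h₁₂, h₀₂, hs₀, hs₁, hs₂⟩ := h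
  have hS : ({a₀, a₁, a₂} : Finset ℕ) ⊆ Q.A := by
    simp only [Finset.insert_subset_iff, Finset.singleton_subset_iff, ha₀, ha₁, ha₂, and_self]
  have hmem := (indicator_one_mem_cycleSpace_iff hS).2 (by
    have hn₀ : a₀ ∉ ({a₁, a₂} : Finset ℕ) := by simp [h₀₁, h₀₂]
    rw [Finset.sum_insert hn₀, Finset.sum_pair h₁₂, Finset.sum_insert hn₀, Finset.sum_pair h₁₂,
      hs₀, hs₁, hs₂]
    abel)
  simpa only [Finset.coe_insert, Finset.coe_singleton] using hmem

theorem Is3Cycle.cOrbit (hA : ClassA Q st) {a₀ a₁ a₂ : ℕ} (h : Is3Cycle Q a₀ a₁ a₂) :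
    COrbit Q st {a₀, a₁, a₂} := by
  obtain ⟨hG, m, p, hf⟩ := hA
  have hdim := (finrank_cycleSpace_le hG hf).trans_eq (ncard_cOrbits hG hf).symm
  have ⟨ha₀, _, _, h₀₁, h₁₂, h₀₂, _⟩ := h
  have hmem : (⟨a₀, ha₀⟩ : Q.A) ∈ ((↑) ⁻¹' ({a₀, a₁, a₂} : Set ℕ) : Set Q.A) := Set.mem_insert _ _
  have hne : ((↑) ⁻¹' ({a₀, a₁, a₂} : Set ℕ) : Set Q.A).indicator (1 : Q.A → ℚ) ⟨a₀, ha₀⟩ ≠ 0 := by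
    rw [Set.indicator_of_mem hmem]
    exact one_ne_zero
  obtain ⟨O, hO, hsupp⟩ :=
    exists_cOrbit_subset_support hG hdim h.indicator_one_mem_cycleSpace hne
  have hsub : O ⊆ {a₀, a₁, a₂} := fun b hb =>
    (hsupp.trans Set.support_indicator_subset) (a := ⟨b, hO.subset_arrows hb⟩) hb
  have hcard : ({a₀, a₁, a₂} : Set ℕ).ncard ≤ O.ncard := by
    rw [hO.ncard_eq_three hG hf]
    exact (Set.ncard_eq_three.2 ⟨a₀, a₁, a₂, h₀₁, h₀₂, h₁₂, rfl⟩).le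
  rwa [← Set.eq_of_subset_of_ncard_le hsub hcard]

theorem Is3Cycle.rel_of_cOrbit (hG : IsGentle Q) {a₀ a₁ a₂ : ℕ} (h : Is3Cycle Q a₀ a₁ a₂)
    (hO : COrbit Q st {a₀, a₁, a₂}) : (a₀, a₁) ∈ Q.rel := by
  obtain ⟨ha₀, ha₁, ha₂, h₀₁, h₁₂, h₀₂, hs₀, hs₁, -⟩ := h
  have hloop : ∀ a ∈ ({a₀, a₁, a₂} : Set ℕ), (a, a) ∉ Q.rel := fun a ha haa => by
    have heq := hO.eq_singleton_of_rel_self hG ha haa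
    have hm₀ : a₀ = a := heq.subset (.inl rfl)
    have hm₁ : a₁ = a := heq.subset (.inr (.inl rfl))
    exact h₀₁ (hm₀.trans hm₁.symm)
  obtain ⟨b, hb⟩ := (hO.inC (.inl rfl)).exists_rel hG
  obtain rfl | rfl | rfl := hO.mem_of_rel hG (.inl rfl) hb
  · exact absurd hb (hloop _ (.inl rfl))
  · exact hb
  -- If `b = a₂`, then `a₁` is a loop and `σ a₁ = -σ a₀ = -τ a₂ = τ a₁`.
  · obtain ⟨-, -, hs₀₂, hσ⟩ := (hG.mem_rel_iff st).1 hb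
    have hs₁₀ : Q.src a₁ = Q.src a₀ := hs₁.trans hs₀₂.symm
    have := st.σ_src a₁ ha₁ a₀ ha₀ h₀₁.symm hs₁₀
    have := st.τ_tgt a₁ ha₁ _ ha₂ h₁₂ (hs₀.symm.trans hs₀₂)
    exact absurd ((hG.mem_rel_iff st).2 ⟨ha₁, ha₁, hs₁₀.trans hs₀, by omega⟩)
      (hloop a₁ (.inr (.inl rfl)))

theorem Is3Cycle.isTriangleTriple (hA : ClassA Q st) {a₀ a₁ a₂ : ℕ} (h : Is3Cycle Q a₀ a₁ a₂) :
    IsTriangleTriple Q a₀ a₁ a₂ :=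
  ⟨h, h.rel_of_cOrbit hA.1 (h.cOrbit hA), h.rotate.rel_of_cOrbit hA.1 (h.rotate.cOrbit hA),
    h.rotate.rotate.rel_of_cOrbit hA.1 (h.rotate.rotate.cOrbit hA)⟩

end Gentle

/-- Let `𝚫 ∈ 𝒜`.  Then every `3`-cycle `(α₀, α₁, α₂)` of
`Δ` satisfies `(α₀,α₁), (α₁,α₂), (α₂,α₀) ∈ R`, i.e. is a triangle of `𝚫`;
consequently triangles of `𝚫` and `3`-cycles of `Δ` (up to cyclic permutation)
coincide, the bijection being induced by `{α, Ψα, Ψ²α} ↦ (α, Ψα, Ψ²α)`. -/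
theorem stmt19 (Q : QuivRel) (st : SigmaTau Q) (hA : ClassA Q st) :
    (∀ a0 a1 a2 : ℕ, Is3Cycle Q a0 a1 a2 →
      (a0, a1) ∈ Q.rel ∧ (a1, a2) ∈ Q.rel ∧ (a2, a0) ∈ Q.rel) ∧
    {S : Finset ℕ | TriangleSet Q S} =
      {S : Finset ℕ | ∃ a0 a1 a2 : ℕ, S = {a0, a1, a2} ∧ Is3Cycle Q a0 a1 a2} := by
  refine ⟨fun _ _ _ h => (h.isTriangleTriple hA).2, Set.ext fun S => ?_⟩
  constructor <;> rintro ⟨a0, a1, a2, hS, h⟩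
  · exact ⟨a0, a1, a2, hS, h.1⟩
  · exact ⟨a0, a1, a2, hS, h.isTriangleTriple hA⟩

end GentleQuiv
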